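/- Let n≥1, β=(1,…,1) and α≥1. If a locally integrable b:ℝ^n→ℂ satisfies ‖b‖_{BMO^{1,α}}<∞ and lim_{r→0} sup{O^{1,α}(b;Q): Q an axis-parallel cube with ℓ(Q)≤r}=0, then b agrees almost everywhere with a constant. In particular, for α≥1 the class VMO^{1,α}(ℝ^n) consists exactly of the a.e. constant functions. -/

import Mathlib

/-!
For `α ≥ 1` the hypothesis says that the mean oscillation of `b` over a cube of side `ℓ` is `o(ℓ)`,
uniformly in the cube. Two cubes of side `ℓ` whose centres are at distance at most `ℓ / 2` in the
sup norm lie in a common cube of side `2ℓ`, so their averages differ by `o(ℓ)`. Points `x`, `y` are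
joined by a chain of `O(1 + |x - y| / ℓ)` such cubes, so the averages over the cubes centred at `x`
and `y` differ by `o(1)`. By the Lebesgue differentiation theorem they tend to `b x` and `b y` for
almost every `x` and `y`.

Cubes are closed balls for the sup norm, so the argument takes place on closed balls of a
finite-dimensional normed space and is carried to `EuclideanSpace ℝ (Fin n)` from `Fin n → ℝ`.
-/

open MeasureTheory

noncomputable section

/-- A `β`-cube in `ℝⁿ`: an axis-parallel rectangle centred at `c` whose `i`-th side
has length `l ^ β i`, where `l > 0` is the sidelength parameter `ℓ(Q)`. -/
structure BetaCube (n : ℕ) (β : Fin n → ℝ) where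
  c : EuclideanSpace ℝ (Fin n)
  l : ℝ
  l_pos : 0 < l

namespace BetaCube

variable {n : ℕ} {β : Fin n → ℝ}

/-- The underlying set of a `β`-cube. -/
def set (Q : BetaCube n β) : Set (EuclideanSpace ℝ (Fin n)) :=
  {x | ∀ i, |x i - Q.c i| ≤ Q.l ^ (β i) / 2}

/-- Translation `Q + v` of a `β`-cube. -/
def translate (Q : BetaCube n β) (v : EuclideanSpace ℝ (Fin n)) : BetaCube n β :=
  ⟨Q.c + v, Q.l, Q.l_pos⟩

end BetaCube

/-- The average `⟨b⟩_Q` of `b` over a `β`-cube `Q`. -/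
def cubeAvg {n : ℕ} {β : Fin n → ℝ} (Q : BetaCube n β)
    (b : EuclideanSpace ℝ (Fin n) → ℂ) : ℂ :=
  ⨍ x in Q.set, b x

/-- The fractional mean oscillation
`O^{β,α}(b;Q) = |Q|^{-α/|β|} · (1/|Q|) ∫_Q |b - ⟨b⟩_Q|`, where `|Q| = ℓ(Q)^{|β|}`. -/
def osc {n : ℕ} (β : Fin n → ℝ) (α : ℝ) (b : EuclideanSpace ℝ (Fin n) → ℂ)
    (Q : BetaCube n β) : ℝ :=
  (Q.l ^ (∑ i, β i)) ^ (-(α / (∑ i, β i))) * ⨍ x in Q.set, ‖b x - cubeAvg Q b‖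

/-- `b ∈ VMO^{β,α}(ℝⁿ)`: `b` is locally integrable, has finite `BMO^{β,α}` seminorm,
and satisfies the three vanishing conditions (small scales, large scales, far away). -/
def MemVMO {n : ℕ} (β : Fin n → ℝ) (α : ℝ) (b : EuclideanSpace ℝ (Fin n) → ℂ) : Prop :=
  LocallyIntegrable b volume ∧
  (∃ M : ℝ, ∀ Q : BetaCube n β, osc β α b Q ≤ M) ∧
  (∀ ε > (0:ℝ), ∃ r > (0:ℝ), ∀ Q : BetaCube n β, Q.l ≤ r → osc β α b Q ≤ ε) ∧
  (∀ ε > (0:ℝ), ∃ r > (0:ℝ), ∀ Q : BetaCube n β, r ≤ Q.l → osc β α b Q ≤ ε) ∧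
  (∀ Q : BetaCube n β, ∀ ε > (0:ℝ), ∃ R : ℝ, ∀ x : EuclideanSpace ℝ (Fin n),
    R ≤ ‖x‖ → osc β α b (Q.translate x) ≤ ε)

section MeanOscillation

variable {X Y F : Type*} [MeasurableSpace X] [MeasurableSpace Y]
  [NormedAddCommGroup F] [NormedSpace ℝ F]

/-- The mean oscillation `⨍ₛ ‖f - ⨍ₛ f‖` of `f` over a set `s` with respect to `μ`, with the average
taken over the same set; it is meant for sets of positive finite measure. -/
def meanOsc (f : X → F) (s : Set X) (μ : Measure X) : ℝ :=
  ⨍ x in s, ‖f x - ⨍ y in s, f y ∂μ‖ ∂μ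

lemma meanOsc_nonneg (f : X → F) (s : Set X) (μ : Measure X) : 0 ≤ meanOsc f s μ :=
  integral_nonneg fun _ => norm_nonneg _

lemma dist_setAverage_le_meanOsc [CompleteSpace F] {μ : Measure X} {f : X → F} {s t : Set X}
    (hst : s ⊆ t) (hs : μ s ≠ 0) (ht : μ t ≠ ⊤) (hf : IntegrableOn f t μ) :
    dist (⨍ x in s, f x ∂μ) (⨍ x in t, f x ∂μ) ≤ μ.real t / μ.real s * meanOsc f t μ := by
  set c := ⨍ x in t, f x ∂μ with hc
  have hs_top : μ s ≠ ⊤ := measure_ne_top_of_subset hst ht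
  have hs_pos : 0 < μ.real s := ENNReal.toReal_pos hs hs_top
  have ht_pos : 0 < μ.real t := hs_pos.trans_le (measureReal_mono hst ht)
  have hsub : (⨍ x in s, f x ∂μ) - c = (μ.real s)⁻¹ • ∫ x in s, (f x - c) ∂μ := by
    rw [integral_sub (hf.mono_set hst) (integrableOn_const hs_top), setIntegral_const, smul_sub,
      inv_smul_smul₀ hs_pos.ne', setAverage_eq]
  calc dist (⨍ x in s, f x ∂μ) c = (μ.real s)⁻¹ * ‖∫ x in s, (f x - c) ∂μ‖ := by
        rw [dist_eq_norm, hsub, norm_smul, norm_inv, Real.norm_of_nonneg hs_pos.le]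
    _ ≤ (μ.real s)⁻¹ * ∫ x in s, ‖f x - c‖ ∂μ := by
        gcongr
        exact norm_integral_le_integral_norm _
    _ ≤ (μ.real s)⁻¹ * ∫ x in t, ‖f x - c‖ ∂μ := by
        gcongr
        · exact ae_of_all _ fun _ => norm_nonneg _
        · exact (hf.sub (integrableOn_const ht)).norm
    _ = μ.real t / μ.real s * meanOsc f t μ := by
        rw [meanOsc, ← hc, setAverage_eq, smul_eq_mul]
        field_simp

lemma setAverage_preimage {μ : Measure X} {ν : Measure Y} {e : X → Y} (he : MeasurePreserving e μ ν)
    (he' : MeasurableEmbedding e) (g : Y → F) (s : Set Y) :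
    ⨍ x in e ⁻¹' s, g (e x) ∂μ = ⨍ y in s, g y ∂ν := by
  rw [setAverage_eq, setAverage_eq, he.setIntegral_preimage_emb he', measureReal_def,
    measureReal_def, he.measure_preimage_emb he']

lemma meanOsc_comp_preimage {μ : Measure X} {ν : Measure Y} {e : X → Y}
    (he : MeasurePreserving e μ ν) (he' : MeasurableEmbedding e) (f : Y → F) (s : Set Y) :
    meanOsc (f ∘ e) (e ⁻¹' s) μ = meanOsc f s ν := by
  simp only [meanOsc, Function.comp_apply, setAverage_preimage he he' f]
  exact setAverage_preimage he he' (fun y => ‖f y - ⨍ z in s, f z ∂ν‖) s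

end MeanOscillation

section Chaining

variable {E M : Type*} [NormedAddCommGroup E] [NormedSpace ℝ E] [PseudoMetricSpace M]

lemma dist_map_le_nat_mul_of_dist_le_nat_mul {g : E → M} {ρ C : ℝ}
    (h : ∀ x y, dist x y ≤ ρ → dist (g x) (g y) ≤ C) (N : ℕ) {x y : E} (hxy : dist x y ≤ N * ρ) :
    dist (g x) (g y) ≤ N * C := by
  induction N generalizing y with
  | zero =>
    obtain rfl : x = y := dist_le_zero.1 (by simpa using hxy)
    simp
  | succ N ih =>
    have hρ : 0 ≤ ρ := nonneg_of_mul_nonneg_right (dist_nonneg.trans hxy) (by positivity)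
    obtain ⟨z, hxz, hzy⟩ : ∃ z, dist x z ≤ N * ρ ∧ dist z y ≤ ρ :=
      exists_dist_le_le (by positivity) hρ (hxy.trans_eq (by push_cast; ring))
    calc dist (g x) (g y) ≤ dist (g x) (g z) + dist (g z) (g y) := dist_triangle _ _ _
      _ ≤ N * C + C := add_le_add (ih hxz) (h z y hzy)
      _ = (N + 1 : ℕ) * C := by push_cast; ring

lemma dist_map_le_of_dist_le {g : E → M} {ρ C : ℝ} (hρ : 0 < ρ)
    (h : ∀ x y, dist x y ≤ ρ → dist (g x) (g y) ≤ C) (x y : E) :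
    dist (g x) (g y) ≤ (dist x y / ρ + 1) * C := by
  have hC : 0 ≤ C := dist_nonneg.trans (h x x (by simpa using hρ.le))
  calc dist (g x) (g y) ≤ ⌈dist x y / ρ⌉₊ * C :=
        dist_map_le_nat_mul_of_dist_le_nat_mul h _ ((div_le_iff₀ hρ).1 (Nat.le_ceil _))
    _ ≤ (dist x y / ρ + 1) * C := by
        gcongr
        exact (Nat.ceil_lt_add_one (by positivity)).le

end Chaining

section Balls

open Metric Module Filter Topology

variable {E F : Type*} [NormedAddCommGroup E] [NormedSpace ℝ E] [FiniteDimensional ℝ E]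
  [MeasurableSpace E] [BorelSpace E] {μ : Measure E} [μ.IsAddHaarMeasure]
  [NormedAddCommGroup F] [NormedSpace ℝ F] [CompleteSpace F] {f : E → F}

lemma dist_average_closedBall_le_meanOsc_two_mul (hf : LocallyIntegrable f μ) {x y : E} {ρ : ℝ}
    (hρ : 0 < ρ) (hxy : dist x y ≤ ρ) :
    dist (⨍ z in closedBall y ρ, f z ∂μ) (⨍ z in closedBall x (2 * ρ), f z ∂μ)
      ≤ 2 ^ finrank ℝ E * meanOsc f (closedBall x (2 * ρ)) μ := by
  have hsub : closedBall y ρ ⊆ closedBall x (2 * ρ) :=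
    closedBall_subset_closedBall' (by rw [dist_comm y x]; linarith)
  have hpos : μ (closedBall y ρ) ≠ 0 := (measure_closedBall_pos μ y hρ).ne'
  have hratio : μ.real (closedBall x (2 * ρ)) / μ.real (closedBall y ρ) = 2 ^ finrank ℝ E := by
    rw [div_eq_iff ((measureReal_ne_zero_iff measure_closedBall_lt_top.ne).2 hpos),
      Measure.addHaar_real_closedBall μ x (by positivity),
      Measure.addHaar_real_closedBall μ y hρ.le, mul_pow, mul_assoc]
  rw [← hratio]
  exact dist_setAverage_le_meanOsc hsub hpos measure_closedBall_lt_top.ne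
    (hf.integrableOn_isCompact (isCompact_closedBall x (2 * ρ)))

lemma dist_average_closedBall_le (hf : LocallyIntegrable f μ) {ρ C : ℝ} (hρ : 0 < ρ)
    (hC : ∀ x, meanOsc f (closedBall x (2 * ρ)) μ ≤ C) (x y : E) :
    dist (⨍ z in closedBall x ρ, f z ∂μ) (⨍ z in closedBall y ρ, f z ∂μ)
      ≤ (dist x y / ρ + 1) * (2 * (2 ^ finrank ℝ E * C)) := by
  refine dist_map_le_of_dist_le (g := fun w => ⨍ z in closedBall w ρ, f z ∂μ) hρ
    (fun u v huv => ?_) x y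
  have hbig : ∀ w, dist u w ≤ ρ →
      dist (⨍ z in closedBall w ρ, f z ∂μ) (⨍ z in closedBall u (2 * ρ), f z ∂μ)
        ≤ 2 ^ finrank ℝ E * C := fun w hw =>
    (dist_average_closedBall_le_meanOsc_two_mul hf hρ hw).trans (by gcongr; exact hC u)
  calc dist (⨍ z in closedBall u ρ, f z ∂μ) (⨍ z in closedBall v ρ, f z ∂μ)
      ≤ 2 ^ finrank ℝ E * C + 2 ^ finrank ℝ E * C :=
        (dist_triangle_right _ _ _).trans
          (add_le_add (hbig u (by simpa using hρ.le)) (hbig v huv))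
    _ = 2 * (2 ^ finrank ℝ E * C) := by ring

lemma tendsto_dist_average_closedBall_zero (hf : LocallyIntegrable f μ)
    (hosc : ∀ ε > 0, ∀ᶠ ρ in 𝓝[>] 0, ∀ x, meanOsc f (closedBall x ρ) μ ≤ ε * ρ) (x y : E) :
    Tendsto (fun ρ => dist (⨍ z in closedBall x ρ, f z ∂μ) (⨍ z in closedBall y ρ, f z ∂μ))
      (𝓝[>] 0) (𝓝 0) := by
  set K : ℝ := 4 * 2 ^ finrank ℝ E * (dist x y + 1) with hK
  have hdouble : Tendsto (fun ρ : ℝ => 2 * ρ) (𝓝[>] 0) (𝓝[>] 0) :=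
    tendsto_iff_comap.2 (comap_mulLeft_nhdsGT_zero two_pos).ge
  refine tendsto_order.2 ⟨fun a ha => .of_forall fun ρ => ha.trans_le dist_nonneg, fun a ha => ?_⟩
  obtain ⟨ε, hε, hεa⟩ : ∃ ε > 0, K * ε < a := exists_pos_mul_lt ha K
  filter_upwards [hdouble.eventually (hosc ε hε), Ioc_mem_nhdsGT one_pos] with ρ hρ ⟨hρ_pos, hρ_le⟩
  calc dist (⨍ z in closedBall x ρ, f z ∂μ) (⨍ z in closedBall y ρ, f z ∂μ)
      ≤ (dist x y / ρ + 1) * (2 * (2 ^ finrank ℝ E * (ε * (2 * ρ)))) :=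
        dist_average_closedBall_le hf hρ_pos hρ x y
    _ = 4 * 2 ^ finrank ℝ E * (dist x y + ρ) * ε := by field_simp; ring
    _ ≤ K * ε := by rw [hK]; gcongr
    _ < a := hεa

theorem ae_const_of_meanOsc_closedBall_le (hf : LocallyIntegrable f μ)
    (hosc : ∀ ε > 0, ∀ᶠ ρ in 𝓝[>] 0, ∀ x, meanOsc f (closedBall x ρ) μ ≤ ε * ρ) :
    ∃ c, f =ᵐ[μ] fun _ => c := by
  have hlebesgue : ∀ᵐ x ∂μ,
      Tendsto (fun ρ => ⨍ z in closedBall x ρ, f z ∂μ) (𝓝[>] 0) (𝓝 (f x)) := by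
    filter_upwards [IsUnifLocDoublingMeasure.ae_tendsto_average μ hf 1] with x hx
    refine hx (fun _ => x) id tendsto_id ?_
    filter_upwards [self_mem_nhdsWithin] with ρ hρ
    exact mem_closedBall_self (by simpa using (Set.mem_Ioi.1 hρ).le)
  obtain ⟨x₀, hx₀⟩ := hlebesgue.exists
  refine ⟨f x₀, ?_⟩
  filter_upwards [hlebesgue] with x hx
  exact dist_eq_zero.1 <|
    tendsto_nhds_unique (hx.dist hx₀) (tendsto_dist_average_closedBall_zero hf hosc x x₀)

end Balls

section Cubes

open Filter Topology

variable {n : ℕ} {α : ℝ} {b : EuclideanSpace ℝ (Fin n) → ℂ}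

lemma preimage_toLp_cube_eq_closedBall (Q : BetaCube n fun _ => 1) :
    WithLp.toLp 2 ⁻¹' Q.set = Metric.closedBall Q.c.ofLp (Q.l / 2) := by
  ext z
  simp [BetaCube.set, dist_pi_le_iff (half_pos Q.l_pos).le, Real.dist_eq]

lemma meanOsc_comp_toLp_closedBall {F : Type*} [NormedAddCommGroup F] [NormedSpace ℝ F]
    (f : EuclideanSpace ℝ (Fin n) → F) (Q : BetaCube n fun _ => 1) :
    meanOsc (f ∘ WithLp.toLp 2) (Metric.closedBall Q.c.ofLp (Q.l / 2)) volume
      = meanOsc f Q.set volume := by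
  rw [← preimage_toLp_cube_eq_closedBall]
  exact meanOsc_comp_preimage (PiLp.volume_preserving_toLp (Fin n))
    (MeasurableEquiv.toLp 2 (Fin n → ℝ)).measurableEmbedding f Q.set

lemma osc_one_eq_rpow_mul_meanOsc (hn : n ≠ 0) (α : ℝ) (b : EuclideanSpace ℝ (Fin n) → ℂ)
    (Q : BetaCube n fun _ => 1) :
    osc (fun _ => 1) α b Q = Q.l ^ (-α) * meanOsc b Q.set volume := by
  have hn' : (n : ℝ) ≠ 0 := Nat.cast_ne_zero.2 hn
  simp only [osc, cubeAvg, meanOsc, Finset.sum_const, Finset.card_univ, Fintype.card_fin,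
    nsmul_eq_mul, mul_one]
  rw [← Real.rpow_mul Q.l_pos.le, mul_neg, mul_div_cancel₀ _ hn']

lemma meanOsc_le_side_mul_osc_one (hn : n ≠ 0) (hα : 1 ≤ α) {Q : BetaCube n fun _ => 1}
    (hQ : Q.l ≤ 1) : meanOsc b Q.set volume ≤ Q.l * osc (fun _ => 1) α b Q := by
  have hl : 0 < Q.l := Q.l_pos
  rw [osc_one_eq_rpow_mul_meanOsc hn, ← mul_assoc]
  refine le_mul_of_one_le_left (meanOsc_nonneg _ _ _) ?_
  rw [Real.rpow_neg hl.le, ← div_eq_mul_inv, one_le_div (by positivity)]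
  exact Real.rpow_le_self_of_le_one hl.le hQ hα

lemma eventually_meanOsc_comp_toLp_closedBall_le (hn : n ≠ 0) (hα : 1 ≤ α)
    (hsmall : ∀ ε > (0 : ℝ), ∃ r > (0 : ℝ), ∀ Q : BetaCube n (fun _ => 1),
      Q.l ≤ r → osc (fun _ => 1) α b Q ≤ ε) {ε : ℝ} (hε : 0 < ε) :
    ∀ᶠ ρ in 𝓝[>] (0 : ℝ), ∀ x : Fin n → ℝ,
      meanOsc (b ∘ WithLp.toLp 2) (Metric.closedBall x ρ) volume ≤ ε * ρ := by
  obtain ⟨r, hr, hbr⟩ := hsmall (ε / 2) (half_pos hε)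
  filter_upwards [Ioc_mem_nhdsGT (half_pos (lt_min hr one_pos))] with ρ ⟨hρ, hρr⟩ x
  obtain ⟨hlr, hl_one⟩ : 2 * ρ ≤ r ∧ 2 * ρ ≤ 1 := le_min_iff.1 (by linarith)
  let Q : BetaCube n fun _ => 1 := ⟨WithLp.toLp 2 x, 2 * ρ, by positivity⟩
  calc meanOsc (b ∘ WithLp.toLp 2) (Metric.closedBall x ρ) volume
      = meanOsc b Q.set volume := by
        simpa [Q] using meanOsc_comp_toLp_closedBall b Q
    _ ≤ 2 * ρ * osc (fun _ => 1) α b Q := meanOsc_le_side_mul_osc_one hn hα hl_one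
    _ ≤ 2 * ρ * (ε / 2) := by
        gcongr
        exact hbr Q hlr
    _ = ε * ρ := by ring

lemma locallyIntegrable_comp_toLp {F : Type*} [NormedAddCommGroup F]
    {f : EuclideanSpace ℝ (Fin n) → F} (hf : LocallyIntegrable f volume) :
    LocallyIntegrable (f ∘ WithLp.toLp 2) (volume : Measure (Fin n → ℝ)) := by
  rw [← (PiLp.volume_preserving_toLp (Fin n)).map_eq] at hf
  exact (locallyIntegrable_map_homeomorph
    (EuclideanSpace.equiv (Fin n) ℝ).symm.toHomeomorph).1 hf

theorem ae_const_of_vanishing_small_scales_general (hn : n ≠ 0) (hα : 1 ≤ α)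
    (hb : LocallyIntegrable b volume)
    (hsmall : ∀ ε > (0 : ℝ), ∃ r > (0 : ℝ), ∀ Q : BetaCube n (fun _ => 1),
      Q.l ≤ r → osc (fun _ => 1) α b Q ≤ ε) :
    ∃ c : ℂ, b =ᵐ[volume] fun _ => c := by
  obtain ⟨c, hc⟩ := ae_const_of_meanOsc_closedBall_le (locallyIntegrable_comp_toLp hb)
    fun _ => eventually_meanOsc_comp_toLp_closedBall_le hn hα hsmall
  exact ⟨c, (PiLp.volume_preserving_ofLp (Fin n)).quasiMeasurePreserving.ae hc⟩

end Cubes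

/-- **For `α ≥ 1` the small-scale vanishing condition forces constancy.** Let
`β = (1,…,1)` and `α ≥ 1`. If a locally integrable `b : ℝⁿ → ℂ` has finite
`BMO^{1,α}` seminorm and its oscillations vanish at small scales, then `b` agrees
almost everywhere with a constant. In particular, for `α ≥ 1` the class
`VMO^{1,α}(ℝⁿ)` consists exactly of the a.e. constant functions. -/
theorem ae_const_of_vanishing_small_scales
    (n : ℕ) (hn : 1 ≤ n) (α : ℝ) (hα : 1 ≤ α)
    (b : EuclideanSpace ℝ (Fin n) → ℂ) (hb : LocallyIntegrable b volume)
    (hfin : ∃ M : ℝ, ∀ Q : BetaCube n (fun _ => 1), osc (fun _ => 1) α b Q ≤ M)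
    (hsmall : ∀ ε > (0:ℝ), ∃ r > (0:ℝ), ∀ Q : BetaCube n (fun _ => 1),
      Q.l ≤ r → osc (fun _ => 1) α b Q ≤ ε) :
    ∃ c : ℂ, b =ᵐ[volume] fun _ => c :=
  ae_const_of_vanishing_small_scales_general (Nat.one_le_iff_ne_zero.1 hn) hα hb hsmall

end
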